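/- (Proposition 3.6, isentropic Euler case.) Let (ρ,u) be a classical solution of the isentropic compressible Euler equations on ℝⁿ × [0,T] satisfying the decay and integrability conditions, and set IJ(0) = G(0) − F(0) + IE(0). If 1 < γ ≤ 1 + 2/n, then for all t ∈ [0,T] the potential energy satisfies I(t) ≤ IJ(0)/(t+1)^{n(γ−1)}; if γ > 1 + 2/n, then I(t) ≤ IJ(0)/(t+1)² for all t ∈ [0,T]. -/

import Mathlib

open MeasureTheory Filter
open scoped InnerProductSpace

noncomputable section

/-- A classical solution of the isentropic compressible Euler equations
`∂ₜρ + div(ρu) = 0`, `∂ₜ(ρuᵢ) + div(ρuᵢu) + ∂ᵢ(ρ^γ) = 0` on `ℝⁿ × [0,T]`,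
together with the decay conditions (9-25), the integrability conditions on the
physical quantities, and differentiability of these quantities with derivatives
computed by differentiating under the integral sign. -/
structure IsentropicEulerSolution (n : ℕ) (γ T : ℝ) where
  ρ : ℝ → EuclideanSpace ℝ (Fin n) → ℝ
  u : ℝ → EuclideanSpace ℝ (Fin n) → EuclideanSpace ℝ (Fin n)
  ρ_nonneg : ∀ t ∈ Set.Icc 0 T, ∀ x, 0 ≤ ρ t x
  /-- `ρ` is `C¹` on `[0,T] × ℝⁿ`. -/
  smooth_ρ : ContDiffOn ℝ 1 (fun p : ℝ × EuclideanSpace ℝ (Fin n) => ρ p.1 p.2)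
    (Set.Icc 0 T ×ˢ Set.univ)
  /-- `u` is `C¹` on `[0,T] × ℝⁿ`. -/
  smooth_u : ContDiffOn ℝ 1 (fun p : ℝ × EuclideanSpace ℝ (Fin n) => u p.1 p.2)
    (Set.Icc 0 T ×ˢ Set.univ)
  /-- Conservation of mass: `∂ₜρ + div(ρu) = 0`. -/
  mass_eq : ∀ t ∈ Set.Icc 0 T, ∀ x,
    deriv (fun τ => ρ τ x) t
      + ∑ i : Fin n, fderiv ℝ (fun y => ρ t y * u t y i) x (EuclideanSpace.single i 1) = 0
  /-- Conservation of momentum: `∂ₜ(ρuᵢ) + div(ρuᵢu) + ∂ᵢ(ρ^γ) = 0`. -/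
  momentum_eq : ∀ t ∈ Set.Icc 0 T, ∀ x, ∀ i : Fin n,
    deriv (fun τ => ρ τ x * u τ x i) t
      + ∑ j : Fin n, fderiv ℝ (fun y => ρ t y * u t y i * u t y j) x (EuclideanSpace.single j 1)
      + fderiv ℝ (fun y => ρ t y ^ γ) x (EuclideanSpace.single i 1) = 0
  /-- decay: `|u| → 0` as `|x| → ∞`. -/
  decay_u : ∀ t ∈ Set.Icc 0 T,
    Tendsto (fun x => ‖u t x‖) (Bornology.cobounded _) (nhds 0)
  /-- decay: `ρ|u| = o(|x|^{-(n+1)})`. -/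
  decay_ρu : ∀ t ∈ Set.Icc 0 T,
    Tendsto (fun x => ‖x‖ ^ (n + 1) * (ρ t x * ‖u t x‖)) (Bornology.cobounded _) (nhds 0)
  /-- decay: `|∇ₓu| = o(|x|^{-n})`. -/
  decay_gradu : ∀ t ∈ Set.Icc 0 T,
    Tendsto (fun x => ‖x‖ ^ n * ‖fderiv ℝ (u t) x‖) (Bornology.cobounded _) (nhds 0)
  /-- decay: the pressure `ρ^γ = o(|x|^{-n})`. -/
  decay_p : ∀ t ∈ Set.Icc 0 T,
    Tendsto (fun x => ‖x‖ ^ n * ρ t x ^ γ) (Bornology.cobounded _) (nhds 0)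
  int_ρ : ∀ t ∈ Set.Icc 0 T, Integrable (ρ t)
  int_ρu : ∀ t ∈ Set.Icc 0 T, Integrable (fun x => ρ t x * ‖u t x‖)
  int_ρu2 : ∀ t ∈ Set.Icc 0 T, Integrable (fun x => ρ t x * ‖u t x‖ ^ 2)
  int_ρx2 : ∀ t ∈ Set.Icc 0 T, Integrable (fun x => ρ t x * ‖x‖ ^ 2)
  int_ρux : ∀ t ∈ Set.Icc 0 T, Integrable (fun x => ρ t x * ‖u t x‖ * ‖x‖)
  int_ργ : ∀ t ∈ Set.Icc 0 T, Integrable (fun x => ρ t x ^ γ)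
  /-- `M(t) = ∫ρ` is differentiable, by differentiation under the integral sign. -/
  hM : ∀ t ∈ Set.Icc 0 T,
    HasDerivAt (fun τ => ∫ x, ρ τ x) (∫ x, deriv (fun τ => ρ τ x) t) t
  /-- `ℙ(t) = ∫ρu` is differentiable, by differentiation under the integral sign. -/
  hP : ∀ t ∈ Set.Icc 0 T,
    HasDerivAt (fun τ => ∫ x, ρ τ x • u τ x) (∫ x, deriv (fun τ => ρ τ x • u τ x) t) t
  /-- `F(t) = ∫ρ u·x` is differentiable, by differentiation under the integral sign. -/
  hF : ∀ t ∈ Set.Icc 0 T,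
    HasDerivAt (fun τ => ∫ x, ρ τ x * ⟪u τ x, x⟫_ℝ)
      (∫ x, deriv (fun τ => ρ τ x * ⟪u τ x, x⟫_ℝ) t) t
  /-- `G(t) = (1/2)∫ρ|x|²` is differentiable, by differentiation under the integral sign. -/
  hG : ∀ t ∈ Set.Icc 0 T,
    HasDerivAt (fun τ => (1 / 2 : ℝ) * ∫ x, ρ τ x * ‖x‖ ^ 2)
      ((1 / 2 : ℝ) * ∫ x, deriv (fun τ => ρ τ x * ‖x‖ ^ 2) t) t
  /-- `IE(t) = E_k(t) + I(t)` is differentiable, by differentiation under the integral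
  sign. -/
  hIE : ∀ t ∈ Set.Icc 0 T,
    HasDerivAt (fun τ => ∫ x, ((1 / 2 : ℝ) * ρ τ x * ‖u τ x‖ ^ 2 + ρ τ x ^ γ / (γ - 1)))
      (∫ x, deriv (fun τ => (1 / 2 : ℝ) * ρ τ x * ‖u τ x‖ ^ 2 + ρ τ x ^ γ / (γ - 1)) t) t

namespace IsentropicEulerSolution

variable {n : ℕ} {γ T : ℝ}

/-- The mass `M(t) = ∫ ρ dx`. -/
def M (S : IsentropicEulerSolution n γ T) (t : ℝ) : ℝ := ∫ x, S.ρ t x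

/-- The momentum `ℙ(t) = ∫ ρ u dx`. -/
def P (S : IsentropicEulerSolution n γ T) (t : ℝ) : EuclideanSpace ℝ (Fin n) :=
  ∫ x, S.ρ t x • S.u t x

/-- The momentum weight `F(t) = ∫ ρ u·x dx`. -/
def F (S : IsentropicEulerSolution n γ T) (t : ℝ) : ℝ := ∫ x, S.ρ t x * ⟪S.u t x, x⟫_ℝ

/-- The momentum of inertia `G(t) = (1/2) ∫ ρ |x|² dx`. -/
def G (S : IsentropicEulerSolution n γ T) (t : ℝ) : ℝ := (1 / 2 : ℝ) * ∫ x, S.ρ t x * ‖x‖ ^ 2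

/-- The kinetic energy `E_k(t) = (1/2) ∫ ρ |u|² dx`. -/
def Ek (S : IsentropicEulerSolution n γ T) (t : ℝ) : ℝ :=
  (1 / 2 : ℝ) * ∫ x, S.ρ t x * ‖S.u t x‖ ^ 2

/-- The potential energy `I(t) = (1/(γ−1)) ∫ ρ^γ dx`. -/
def I (S : IsentropicEulerSolution n γ T) (t : ℝ) : ℝ := (1 / (γ - 1)) * ∫ x, S.ρ t x ^ γ

/-- The energy `IE(t) = E_k(t) + I(t)`. -/
def IE (S : IsentropicEulerSolution n γ T) (t : ℝ) : ℝ := S.Ek t + S.I t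

/-- The functional `IJ(t) = G(t) − (t+1)F(t) + (t+1)² IE(t)`. -/
def IJ (S : IsentropicEulerSolution n γ T) (t : ℝ) : ℝ :=
  S.G t - (t + 1) * S.F t + (t + 1) ^ 2 * S.IE t

end IsentropicEulerSolution

section General

variable {n : ℕ}

local notation "𝔼" => EuclideanSpace ℝ (Fin n)

/-- Differentiation under the integral sign for a `C¹` integrand against a compactly supported
weight. -/
lemma hasDerivAt_integral_mul_of_hasCompactSupport {a b t : ℝ} {g : ℝ → 𝔼 → ℝ} {ψ : 𝔼 → ℝ}
    (hg : ContDiffOn ℝ 1 (fun p : ℝ × 𝔼 => g p.1 p.2) (Set.Ioo a b ×ˢ Set.univ))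
    (hψ : Continuous ψ) (hψc : HasCompactSupport ψ) (ht : t ∈ Set.Ioo a b) :
    HasDerivAt (fun τ => ∫ x, g τ x * ψ x) (∫ x, deriv (fun τ => g τ x) t * ψ x) t := by
  have hopen : IsOpen (Set.Ioo a b ×ˢ (Set.univ : Set 𝔼)) := isOpen_Ioo.prod isOpen_univ
  have hderiv : ∀ τ ∈ Set.Ioo a b, ∀ x, HasDerivAt (fun τ => g τ x)
      (fderiv ℝ (fun p : ℝ × 𝔼 => g p.1 p.2) (τ, x) (1, 0)) τ := by
    intro τ hτ x
    have h1 : HasFDerivAt (fun p : ℝ × 𝔼 => g p.1 p.2) _ (τ, x) :=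
      ((hg.differentiableOn one_ne_zero).differentiableAt
        (hopen.mem_nhds ⟨hτ, trivial⟩)).hasFDerivAt
    exact h1.comp_hasDerivAt τ ((hasDerivAt_id τ).prodMk (hasDerivAt_const τ x))
  have hcont : ContinuousOn (fun p => fderiv ℝ (fun p : ℝ × 𝔼 => g p.1 p.2) p (1, 0))
      (Set.Ioo a b ×ˢ Set.univ) :=
    (hg.continuousOn_fderiv_of_isOpen hopen le_rfl).clm_apply continuousOn_const
  have hslice : ∀ τ ∈ Set.Ioo a b, Continuous (g τ) := by
    intro τ hτ
    exact hg.continuousOn.comp_continuous (f := fun x => (τ, x)) (by fun_prop)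
      fun x => ⟨hτ, trivial⟩
  obtain ⟨a', ha, ha'⟩ := exists_between ht.1
  obtain ⟨b', hb', hb⟩ := exists_between ht.2
  obtain ⟨C, hC⟩ := (isCompact_Icc.prod hψc.isCompact).exists_bound_of_continuousOn
    (hcont.mono (t := Set.Icc a' b' ×ˢ tsupport ψ)
      (Set.prod_mono (Set.Icc_subset_Ioo ha hb) (Set.subset_univ _)))
  have hψi : Integrable ψ := hψ.integrable_of_hasCompactSupport hψc
  have heq : ∀ x, deriv (fun τ => g τ x) t =
      fderiv ℝ (fun p : ℝ × 𝔼 => g p.1 p.2) (t, x) (1, 0) := fun x => (hderiv t ht x).deriv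
  simp_rw [heq]
  have hcs : ∀ τ ∈ Set.Ioo a b, Continuous fun x =>
      fderiv ℝ (fun p : ℝ × 𝔼 => g p.1 p.2) (τ, x) (1, 0) := fun τ hτ =>
    hcont.comp_continuous (f := fun x => (τ, x)) (by fun_prop) fun x => ⟨hτ, trivial⟩
  refine (hasDerivAt_integral_of_dominated_loc_of_deriv_le (s := Set.Ioo a' b')
    (F' := fun τ x => fderiv ℝ (fun p : ℝ × 𝔼 => g p.1 p.2) (τ, x) (1, 0) * ψ x)
    (bound := fun x => C * ‖ψ x‖) (Ioo_mem_nhds ha' hb') ?_ ?_ ?_ ?_ (hψi.norm.const_mul C) ?_).2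
  · filter_upwards [Ioo_mem_nhds ht.1 ht.2] with τ hτ
    exact ((hslice τ hτ).mul hψ).aestronglyMeasurable
  · exact ((hslice t ht).mul hψ).integrable_of_hasCompactSupport hψc.mul_left
  · exact ((hcs t ht).mul hψ).aestronglyMeasurable
  · refine ae_of_all _ fun x τ hτ => ?_
    by_cases hx : x ∈ tsupport ψ
    · rw [norm_mul]
      exact mul_le_mul_of_nonneg_right (hC (τ, x) ⟨Set.Ioo_subset_Icc_self hτ, hx⟩) (norm_nonneg _)
    · simp [image_eq_zero_of_notMem_tsupport hx]
  · refine ae_of_all _ fun x τ hτ => ?_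
    exact (hderiv τ ⟨ha.trans hτ.1, hτ.2.trans hb⟩ x).mul_const _

lemma fderiv_apply_eq_sum_single (L : 𝔼 →L[ℝ] ℝ) (v : 𝔼) :
    ∑ i, v i * L (EuclideanSpace.single i 1) = L v := by
  conv_rhs => rw [← (EuclideanSpace.basisFun (Fin n) ℝ).sum_repr v]
  simp

/-- Integration by parts of a divergence against a compactly supported test function. -/
lemma integral_divergence_mul_eq_neg {W : Fin n → 𝔼 → ℝ} {ψ : 𝔼 → ℝ}
    (hW : ∀ i, ContDiff ℝ 1 (W i)) (hψ : ContDiff ℝ 1 ψ) (hψc : HasCompactSupport ψ) :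
    ∫ x, (∑ i, fderiv ℝ (W i) x (EuclideanSpace.single i 1)) * ψ x =
      -∫ x, ∑ i, W i x * fderiv ℝ ψ x (EuclideanSpace.single i 1) := by
  have hc : ∀ {f : 𝔼 → ℝ}, ContDiff ℝ 1 f → ∀ v, Continuous fun x => fderiv ℝ f x v :=
    fun hf v => (hf.continuous_fderiv one_ne_zero).clm_apply continuous_const
  have hc' : ∀ v, HasCompactSupport fun x => fderiv ℝ ψ x v := fun v => hψc.fderiv_apply ℝ v
  have h1 : ∀ i, Integrable fun x => fderiv ℝ (W i) x (EuclideanSpace.single i 1) * ψ x :=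
    fun i => ((hc (hW i) _).mul hψ.continuous).integrable_of_hasCompactSupport hψc.mul_left
  have h2 : ∀ i, Integrable fun x => W i x * fderiv ℝ ψ x (EuclideanSpace.single i 1) :=
    fun i => ((hW i).continuous.mul (hc hψ _)).integrable_of_hasCompactSupport (hc' _).mul_left
  simp_rw [Finset.sum_mul]
  rw [integral_finsetSum _ fun i _ => h1 i, integral_finsetSum _ fun i _ => h2 i,
    ← Finset.sum_neg_distrib]
  refine Finset.sum_congr rfl fun i _ => ?_
  rw [integral_mul_fderiv_eq_neg_fderiv_mul_of_integrable (h1 i) (h2 i)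
    (((hW i).continuous.mul hψ.continuous).integrable_of_hasCompactSupport hψc.mul_left)
    (fun x _ => (hW i).differentiable one_ne_zero x)
    (fun x _ => hψ.differentiable one_ne_zero x), neg_neg]

/-- Smooth cutoffs equal to `1` on the ball of radius `k` whose gradients are `O(1/|x|)`. -/
lemma exists_cutoff_seq (n : ℕ) :
    ∃ (χ : ℕ → EuclideanSpace ℝ (Fin n) → ℝ) (C : ℝ), 0 ≤ C ∧ (∀ k, ContDiff ℝ 1 (χ k)) ∧
      (∀ k, HasCompactSupport (χ k)) ∧ (∀ k x, 0 ≤ χ k x ∧ χ k x ≤ 1) ∧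
      (∀ (k : ℕ) x, x ∈ Metric.closedBall 0 (k : ℝ) → χ k x = 1 ∧ fderiv ℝ (χ k) x = 0) ∧
      (∀ k x, ‖x‖ * ‖fderiv ℝ (χ k) x‖ ≤ C) ∧
      (∀ (k : ℕ) x, ‖fderiv ℝ (χ k) x‖ ≤ C / ((k : ℝ) + 1)) := by
  let φ : ContDiffBump (0 : EuclideanSpace ℝ (Fin n)) := ⟨1, 2, one_pos, one_lt_two⟩
  have hφ : ContDiff ℝ 1 φ := φ.contDiff
  obtain ⟨C, hC⟩ := (hφ.continuous_fderiv one_ne_zero).bounded_above_of_compact_support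
    (φ.hasCompactSupport.fderiv (𝕜 := ℝ))
  have hC0 : 0 ≤ C := (norm_nonneg _).trans (hC 0)
  have hpos : ∀ k : ℕ, (0 : ℝ) < (k : ℝ) + 1 := fun k => by positivity
  have hfd : ∀ (k : ℕ) x, fderiv ℝ (fun y => φ (((k : ℝ) + 1)⁻¹ • y)) x =
      ((k : ℝ) + 1)⁻¹ • fderiv ℝ φ (((k : ℝ) + 1)⁻¹ • x) := fun k x => by
    rw [fderiv_comp_smul]
  have hb : ∀ (k : ℕ) x, ‖fderiv ℝ (fun y => φ (((k : ℝ) + 1)⁻¹ • y)) x‖ ≤ C / ((k : ℝ) + 1) := by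
    intro k x
    rw [hfd, norm_smul, Real.norm_of_nonneg (inv_nonneg.2 (hpos k).le), div_eq_inv_mul]
    exact mul_le_mul_of_nonneg_left (hC _) (inv_nonneg.2 (hpos k).le)
  refine ⟨fun k y => φ (((k : ℝ) + 1)⁻¹ • y), 2 * C, by positivity, fun k => ?_, fun k => ?_,
    fun k x => ⟨φ.nonneg, φ.le_one⟩, fun k x hx => ?_, fun k x => ?_, fun k x => ?_⟩
  · exact hφ.comp (contDiff_const_smul _)
  · exact φ.hasCompactSupport.comp_homeomorph (Homeomorph.smulOfNeZero _ (inv_ne_zero (hpos k).ne'))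
  · have hev : (fun y => φ (((k : ℝ) + 1)⁻¹ • y)) =ᶠ[nhds x] fun _ => 1 := by
      have hx' : x ∈ Metric.ball (0 : EuclideanSpace ℝ (Fin n)) (k + 1) := by
        simp only [Metric.mem_closedBall, Metric.mem_ball] at *
        linarith
      filter_upwards [Metric.isOpen_ball.mem_nhds hx'] with y hy
      apply φ.one_of_mem_closedBall
      simp only [Metric.mem_ball, dist_zero_right, Metric.mem_closedBall, φ] at *
      rw [norm_smul, Real.norm_of_nonneg (inv_nonneg.2 (hpos k).le), inv_mul_le_iff₀ (hpos k)]
      linarith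
    exact ⟨hev.self_of_nhds, by rw [hev.fderiv_eq]; simp⟩
  · by_cases hx : ‖x‖ ≤ 2 * ((k : ℝ) + 1)
    · calc _ ≤ 2 * ((k : ℝ) + 1) * (C / ((k : ℝ) + 1)) := by gcongr; exact hb k x
        _ = 2 * C := by have := (hpos k).ne'; field_simp
    · have : fderiv ℝ φ (((k : ℝ) + 1)⁻¹ • x) = 0 := by
        apply image_eq_zero_of_notMem_tsupport
        intro h
        have h2 := tsupport_fderiv_subset ℝ h
        rw [φ.tsupport_eq] at h2
        simp only [dist_zero_right, Metric.mem_closedBall, φ] at h2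
        rw [norm_smul, Real.norm_of_nonneg (inv_nonneg.2 (hpos k).le),
          inv_mul_le_iff₀ (hpos k)] at h2
        linarith
      rw [hfd, this]
      simpa using hC0
  · refine (hb k x).trans ?_
    gcongr
    linarith

/-- Tails of a continuous nonnegative density are uniformly small if its total integral is
continuous in the parameter. -/
lemma tendstoUniformlyOn_setIntegral_compl_closedBall {a b : ℝ} {e : ℝ → 𝔼 → ℝ}
    (h0 : ∀ t ∈ Set.Icc a b, ∀ x, 0 ≤ e t x)
    (hc : ContinuousOn (fun p : ℝ × 𝔼 => e p.1 p.2) (Set.Icc a b ×ˢ Set.univ))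
    (hi : ∀ t ∈ Set.Icc a b, Integrable (e t))
    (hI : ContinuousOn (fun t => ∫ x, e t x) (Set.Icc a b)) :
    TendstoUniformlyOn (fun (k : ℕ) t => ∫ x in (Metric.closedBall (0 : 𝔼) (k : ℝ))ᶜ, e t x)
      (fun _ => 0) atTop (Set.Icc a b) := by
  have hmono : Monotone fun k : ℕ => Metric.closedBall (0 : 𝔼) (k : ℝ) := fun i j hij =>
    Metric.closedBall_subset_closedBall (by exact_mod_cast hij)
  have hU : (⋃ k : ℕ, Metric.closedBall (0 : 𝔼) (k : ℝ)) = Set.univ :=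
    Metric.iUnion_closedBall_nat 0
  have key : TendstoUniformlyOn
      (fun (k : ℕ) t => ∫ x in Metric.closedBall (0 : 𝔼) (k : ℝ), e t x)
      (fun t => ∫ x, e t x) atTop (Set.Icc a b) := by
    refine Monotone.tendstoUniformlyOn_of_forall_tendsto isCompact_Icc (fun k => ?_)
      (fun t ht i j hij => ?_) hI fun t ht => ?_
    · rw [continuousOn_iff_continuous_domRestrict]
      refine continuous_parametric_integral_of_continuous (X := Set.Icc a b)
        (f := fun t x => e t x) ?_ (isCompact_closedBall 0 (k : ℝ))
      exact hc.comp_continuous (f := fun p : Set.Icc a b × 𝔼 => ((p.1 : ℝ), p.2)) (by fun_prop)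
        fun p => ⟨p.1.2, trivial⟩
    · exact setIntegral_mono_set (hi t ht).integrableOn (ae_of_all _ (h0 t ht))
        (hmono hij).eventuallyLE
    · have := tendsto_setIntegral_of_monotone (μ := volume) (f := e t)
        (fun k : ℕ => Metric.isClosed_closedBall.measurableSet) hmono (hi t ht).integrableOn
      rwa [hU, setIntegral_univ] at this
  rw [Metric.tendstoUniformlyOn_iff] at key ⊢
  intro ε hε
  filter_upwards [key ε hε] with k hk t ht
  have := hk t ht
  rw [← integral_add_compl (Metric.isClosed_closedBall (x := (0 : 𝔼)) (ε := (k : ℝ))).measurableSet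
    (hi t ht)] at this
  simpa [Real.dist_eq] using this

lemma abs_integral_sub_le_setIntegral_compl {f g e : 𝔼 → ℝ} {C r : ℝ}
    (hf : AEStronglyMeasurable f) (hg : Integrable g) (he : Integrable e)
    (hin : ∀ x ∈ Metric.closedBall 0 r, f x = g x) (h : ∀ x, |f x - g x| ≤ C * e x) :
    |(∫ x, f x) - ∫ x, g x| ≤ C * ∫ x in (Metric.closedBall (0 : 𝔼) r)ᶜ, e x := by
  have hd : Integrable fun x => f x - g x :=
    (he.const_mul C).mono' (hf.sub hg.1) (ae_of_all _ h)
  have hfi : Integrable f := by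
    simpa only [sub_add_cancel] using hd.fun_add hg
  rw [← integral_sub hfi hg, ← integral_const_mul,
    ← setIntegral_eq_integral_of_forall_compl_eq_zero (s := (Metric.closedBall (0 : 𝔼) r)ᶜ)
      (f := fun x => f x - g x)
      (fun x hx => sub_eq_zero.2 (hin x (not_not.1 hx)))]
  rw [← Real.norm_eq_abs]
  exact norm_integral_le_of_norm_le (he.const_mul C).integrableOn (ae_of_all _ h)

/-- Passage to the limit in truncated balance laws: if the truncations indexed by `k` agree with
their limits on the ball of radius `k`, up to errors controlled by a density with continuous total
integral, the derivative formula survives in the limit. -/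
lemma hasDerivAt_integral_of_truncation {a b C t : ℝ} {e f f' : ℝ → 𝔼 → ℝ}
    {fk fk' : ℕ → ℝ → 𝔼 → ℝ}
    (h0 : ∀ t ∈ Set.Icc a b, ∀ x, 0 ≤ e t x)
    (hc : ContinuousOn (fun p : ℝ × 𝔼 => e p.1 p.2) (Set.Icc a b ×ˢ Set.univ))
    (hi : ∀ t ∈ Set.Icc a b, Integrable (e t))
    (hI : ContinuousOn (fun t => ∫ x, e t x) (Set.Icc a b))
    (hd : ∀ k, ∀ t ∈ Set.Ioo a b, HasDerivAt (fun τ => ∫ x, fk k τ x) (∫ x, fk' k t x) t)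
    (hfk : ∀ k, ∀ t ∈ Set.Ioo a b, Continuous (fk k t))
    (hfk' : ∀ k, ∀ t ∈ Set.Ioo a b, Continuous (fk' k t))
    (hf : ∀ t ∈ Set.Ioo a b, Integrable (f t)) (hf' : ∀ t ∈ Set.Ioo a b, Integrable (f' t))
    (hin : ∀ (k : ℕ), ∀ t ∈ Set.Ioo a b, ∀ x ∈ Metric.closedBall 0 (k : ℝ),
      fk k t x = f t x ∧ fk' k t x = f' t x)
    (hle : ∀ k, ∀ t ∈ Set.Ioo a b, ∀ x, |fk k t x - f t x| ≤ C * e t x)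
    (hle' : ∀ k, ∀ t ∈ Set.Ioo a b, ∀ x, |fk' k t x - f' t x| ≤ C * e t x)
    (ht : t ∈ Set.Ioo a b) :
    HasDerivAt (fun τ => ∫ x, f τ x) (∫ x, f' t x) t := by
  have htail := tendstoUniformlyOn_setIntegral_compl_closedBall h0 hc hi hI
  have hunif : ∀ {g : ℝ → 𝔼 → ℝ} {gk : ℕ → ℝ → 𝔼 → ℝ},
      (∀ k, ∀ t ∈ Set.Ioo a b, |(∫ x, gk k t x) - ∫ x, g t x| ≤
        C * ∫ x in (Metric.closedBall (0 : 𝔼) (k : ℝ))ᶜ, e t x) →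
      TendstoUniformlyOn (fun k t => ∫ x, gk k t x) (fun t => ∫ x, g t x) atTop
        (Set.Ioo a b) := by
    intro g gk hgk
    rw [Metric.tendstoUniformlyOn_iff] at htail ⊢
    intro ε hε
    filter_upwards [htail (ε / (|C| + 1)) (by positivity)] with k hk s hs
    have h1 := hk s (Set.Ioo_subset_Icc_self hs)
    rw [Real.dist_eq, zero_sub, abs_neg, lt_div_iff₀ (by positivity)] at h1
    rw [dist_comm, Real.dist_eq]
    refine (hgk k s hs).trans_lt (lt_of_le_of_lt ?_ h1)
    refine (le_abs_self _).trans ?_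
    rw [abs_mul, mul_comm]
    gcongr
    linarith
  have hF := hunif fun k s hs => abs_integral_sub_le_setIntegral_compl
    (hfk k s hs).aestronglyMeasurable (hf s hs) (hi s (Set.Ioo_subset_Icc_self hs))
    (fun x hx => (hin k s hs x hx).1) (hle k s hs)
  have hF' := hunif fun k s hs => abs_integral_sub_le_setIntegral_compl
    (hfk' k s hs).aestronglyMeasurable (hf' s hs) (hi s (Set.Ioo_subset_Icc_self hs))
    (fun x hx => (hin k s hs x hx).2) (hle' k s hs)
  exact hasDerivAt_of_tendstoUniformlyOn isOpen_Ioo hF' (Eventually.of_forall hd)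
    (fun s hs => hF.tendsto_at hs) ht

end General

namespace IsentropicEulerSolution

section Balance

variable {n : ℕ} {γ T : ℝ} (S : IsentropicEulerSolution n γ T)

local notation "𝔼" => EuclideanSpace ℝ (Fin n)

lemma contDiffOn_u_apply (i : Fin n) :
    ContDiffOn ℝ 1 (fun p : ℝ × 𝔼 => S.u p.1 p.2 i) (Set.Icc 0 T ×ˢ Set.univ) :=
  (EuclideanSpace.proj i : 𝔼 →L[ℝ] ℝ).contDiff.comp_contDiffOn S.smooth_u

lemma contDiff_ρ {t : ℝ} (ht : t ∈ Set.Icc 0 T) : ContDiff ℝ 1 (S.ρ t) := by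
  rw [← contDiffOn_univ]
  exact S.smooth_ρ.comp (f := fun x => (t, x)) (by fun_prop) fun x _ => ⟨ht, trivial⟩

lemma contDiff_u {t : ℝ} (ht : t ∈ Set.Icc 0 T) : ContDiff ℝ 1 (S.u t) := by
  rw [← contDiffOn_univ]
  exact S.smooth_u.comp (f := fun x => (t, x)) (by fun_prop) fun x _ => ⟨ht, trivial⟩

lemma contDiff_u_apply {t : ℝ} (ht : t ∈ Set.Icc 0 T) (i : Fin n) :
    ContDiff ℝ 1 fun x => S.u t x i :=
  (EuclideanSpace.proj i : 𝔼 →L[ℝ] ℝ).contDiff.comp (S.contDiff_u ht)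

lemma contDiff_pressure (hγ : 1 < γ) {t : ℝ} (ht : t ∈ Set.Icc 0 T) :
    ContDiff ℝ 1 fun x => S.ρ t x ^ γ :=
  (Real.contDiff_rpow_const_of_le (n := 1) (by simpa using hγ.le)).comp (S.contDiff_ρ ht)

lemma differentiableAt_time_ρ {t : ℝ} (ht : t ∈ Set.Ioo 0 T) (x : 𝔼) :
    DifferentiableAt ℝ (fun τ => S.ρ τ x) t := by
  have h := (S.smooth_ρ.differentiableOn one_ne_zero).differentiableAt (x := (t, x))
    (prod_mem_nhds (Icc_mem_nhds ht.1 ht.2) univ_mem)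
  exact h.comp t (f := fun τ => (τ, x)) (by fun_prop)

lemma differentiableAt_time_u {t : ℝ} (ht : t ∈ Set.Ioo 0 T) (x : 𝔼) :
    DifferentiableAt ℝ (fun τ => S.u τ x) t := by
  have h := (S.smooth_u.differentiableOn one_ne_zero).differentiableAt (x := (t, x))
    (prod_mem_nhds (Icc_mem_nhds ht.1 ht.2) univ_mem)
  exact h.comp t (f := fun τ => (τ, x)) (by fun_prop)

/-- Weak form of conservation of mass. -/
lemma hasDerivAt_integral_ρ_mul {ψ : 𝔼 → ℝ} (hψ : ContDiff ℝ 1 ψ) (hψc : HasCompactSupport ψ)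
    {t : ℝ} (ht : t ∈ Set.Ioo 0 T) :
    HasDerivAt (fun τ => ∫ x, S.ρ τ x * ψ x) (∫ x, S.ρ t x * fderiv ℝ ψ x (S.u t x)) t := by
  have ht' := Set.Ioo_subset_Icc_self ht
  have h := hasDerivAt_integral_mul_of_hasCompactSupport (g := S.ρ)
    (S.smooth_ρ.mono (Set.prod_mono Set.Ioo_subset_Icc_self subset_rfl)) hψ.continuous hψc ht
  convert h using 1
  have hibp := integral_divergence_mul_eq_neg
    (fun i => (S.contDiff_ρ ht').mul (S.contDiff_u_apply ht' i)) hψ hψc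
  have hm : ∀ x, deriv (fun τ => S.ρ τ x) t * ψ x =
      -((∑ i : Fin n, fderiv ℝ (fun y => S.ρ t y * S.u t y i) x (EuclideanSpace.single i 1))
        * ψ x) := fun x => by
    linear_combination ψ x * S.mass_eq t ht' x
  simp_rw [hm]
  rw [integral_neg, hibp, neg_neg]
  refine integral_congr_ae (ae_of_all _ fun x => ?_)
  simp only [mul_assoc, ← Finset.mul_sum, fderiv_apply_eq_sum_single]

/-- Weak form of conservation of momentum. -/
lemma hasDerivAt_integral_ρu_mul (hγ : 1 < γ) {ψ : 𝔼 → ℝ} (hψ : ContDiff ℝ 1 ψ)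
    (hψc : HasCompactSupport ψ) {t : ℝ} (ht : t ∈ Set.Ioo 0 T) (i : Fin n) :
    HasDerivAt (fun τ => ∫ x, S.ρ τ x * S.u τ x i * ψ x)
      (∫ x, (S.ρ t x * S.u t x i * fderiv ℝ ψ x (S.u t x)
        + S.ρ t x ^ γ * fderiv ℝ ψ x (EuclideanSpace.single i 1))) t := by
  have ht' := Set.Ioo_subset_Icc_self ht
  have h := hasDerivAt_integral_mul_of_hasCompactSupport (g := fun t x => S.ρ t x * S.u t x i)
    ((S.smooth_ρ.mul (S.contDiffOn_u_apply i)).mono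
      (Set.prod_mono Set.Ioo_subset_Icc_self subset_rfl)) hψ.continuous hψc ht
  convert h using 1
  have hibp := integral_divergence_mul_eq_neg
    (W := fun j x => S.ρ t x * S.u t x i * S.u t x j + if j = i then S.ρ t x ^ γ else 0)
    (fun j => (((S.contDiff_ρ ht').mul (S.contDiff_u_apply ht' i)).mul
      (S.contDiff_u_apply ht' j)).add (by
        split_ifs
        · exact S.contDiff_pressure hγ ht'
        · exact contDiff_const)) hψ hψc
  have hm : ∀ x, deriv (fun τ => S.ρ τ x * S.u τ x i) t * ψ x =
      -((∑ j : Fin n, fderiv ℝ (fun x => S.ρ t x * S.u t x i * S.u t x j +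
        if j = i then S.ρ t x ^ γ else 0) x (EuclideanSpace.single j 1)) * ψ x) := fun x => by
    have hsum : ∑ j : Fin n, fderiv ℝ (fun x => S.ρ t x * S.u t x i * S.u t x j +
        if j = i then S.ρ t x ^ γ else 0) x (EuclideanSpace.single j 1) =
        ∑ j : Fin n, fderiv ℝ (fun y => S.ρ t y * S.u t y i * S.u t y j) x
          (EuclideanSpace.single j 1)
        + fderiv ℝ (fun y => S.ρ t y ^ γ) x (EuclideanSpace.single i 1) := by
      have hj : ∀ j, fderiv ℝ (fun x => S.ρ t x * S.u t x i * S.u t x j +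
          if j = i then S.ρ t x ^ γ else 0) x (EuclideanSpace.single j 1) =
          fderiv ℝ (fun y => S.ρ t y * S.u t y i * S.u t y j) x (EuclideanSpace.single j 1)
          + if j = i then fderiv ℝ (fun y => S.ρ t y ^ γ) x (EuclideanSpace.single j 1)
            else 0 := by
        intro j
        have hd := (((S.contDiff_ρ ht').mul (S.contDiff_u_apply ht' i)).mul
          (S.contDiff_u_apply ht' j)).differentiable one_ne_zero x
        have hp := (S.contDiff_pressure hγ ht').differentiable one_ne_zero x
        split_ifs with hji
        · rw [fderiv_fun_add hd hp]; rfl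
        · simp
      simp_rw [hj, Finset.sum_add_distrib]
      simp
    rw [hsum]
    linear_combination ψ x * S.momentum_eq t ht' x i
  simp_rw [hm]
  rw [integral_neg, hibp, neg_neg]
  refine integral_congr_ae (ae_of_all _ fun x => ?_)
  simp only [add_mul, Finset.sum_add_distrib, ite_mul, zero_mul, Finset.sum_ite_eq',
    Finset.mem_univ, if_true]
  simp only [mul_assoc, ← Finset.mul_sum, fderiv_apply_eq_sum_single]

/-- The energy density. -/
def energyDensity (t : ℝ) (x : 𝔼) : ℝ :=
  (1 / 2 : ℝ) * S.ρ t x * ‖S.u t x‖ ^ 2 + S.ρ t x ^ γ / (γ - 1)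

/-- The energy flux is this enthalpy-type density times the velocity. -/
def enthalpyDensity (t : ℝ) (x : 𝔼) : ℝ :=
  (1 / 2 : ℝ) * S.ρ t x * ‖S.u t x‖ ^ 2 + γ / (γ - 1) * S.ρ t x ^ γ

lemma contDiff_enthalpyDensity (hγ : 1 < γ) {t : ℝ} (ht : t ∈ Set.Icc 0 T) :
    ContDiff ℝ 1 (S.enthalpyDensity t) :=
  ((contDiff_const.mul (S.contDiff_ρ ht)).mul ((S.contDiff_u ht).norm_sq ℝ)).add
    (contDiff_const.mul (S.contDiff_pressure hγ ht))

lemma integrable_energyDensity {t : ℝ} (ht : t ∈ Set.Icc 0 T) :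
    Integrable (S.energyDensity t) := by
  refine Integrable.fun_add ?_ ((S.int_ργ t ht).div_const _)
  simpa only [mul_assoc] using (S.int_ρu2 t ht).const_mul (1 / 2)

lemma integrable_enthalpyDensity {t : ℝ} (ht : t ∈ Set.Icc 0 T) :
    Integrable (S.enthalpyDensity t) := by
  refine Integrable.fun_add ?_ ((S.int_ργ t ht).const_mul _)
  simpa only [mul_assoc] using (S.int_ρu2 t ht).const_mul (1 / 2)

/-- Local conservation of energy. -/
lemma deriv_energyDensity (hγ : 1 < γ) {t : ℝ} (ht : t ∈ Set.Ioo 0 T) (x : 𝔼) :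
    deriv (fun τ => S.energyDensity τ x) t =
      -∑ i : Fin n, fderiv ℝ (fun y => S.enthalpyDensity t y * S.u t y i) x
        (EuclideanSpace.single i 1) := by
  have ht' := Set.Ioo_subset_Icc_self ht
  have hmass := S.mass_eq t ht' x
  have hmom := S.momentum_eq t ht' x
  have hr := (S.differentiableAt_time_ρ ht x).hasDerivAt
  have hw := (S.differentiableAt_time_u ht x).hasDerivAt
  set r := deriv (fun τ => S.ρ τ x) t
  set w := deriv (fun τ => S.u τ x) t
  have hwi : ∀ i, HasDerivAt (fun τ => S.u τ x i) (w i) t := fun i =>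
    (EuclideanSpace.proj i : 𝔼 →L[ℝ] ℝ).hasFDerivAt.comp_hasDerivAt t hw
  have hR := ((S.contDiff_ρ ht').differentiable one_ne_zero x).hasFDerivAt
  have hU := fun i => ((S.contDiff_u_apply ht' i).differentiable one_ne_zero x).hasFDerivAt
  set DR := fderiv ℝ (S.ρ t) x
  set DU := fun i => fderiv ℝ (fun y => S.u t y i) x with hDU
  have hP := hR.rpow_const (p := γ) (Or.inr hγ.le)
  have hsq : ∀ (τ : ℝ) (y : 𝔼), ‖S.u τ y‖ ^ 2 = ∑ i, S.u τ y i ^ 2 := fun τ y =>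
    EuclideanSpace.real_norm_sq_eq _
  have het : deriv (fun τ => S.energyDensity τ x) t =
      1 / 2 * r * (∑ i, S.u t x i ^ 2) + S.ρ t x * (∑ i, S.u t x i * w i)
        + γ * S.ρ t x ^ (γ - 1) * r / (γ - 1) := by
    have hN : HasDerivAt (fun τ => ∑ i, S.u τ x i ^ 2) (∑ i, 2 * S.u t x i * w i) t := by
      refine HasDerivAt.fun_sum fun i _ => ?_
      simpa using (hwi i).fun_pow 2
    have h := (((hr.const_mul (1 / 2 : ℝ)).fun_mul hN).fun_add
      ((hr.rpow_const (p := γ) (Or.inr hγ.le)).div_const (γ - 1))).deriv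
    simp only [energyDensity, hsq]
    rw [h]
    simp only [mul_assoc, ← Finset.mul_sum]
    ring
  have hq : ∀ i, fderiv ℝ (fun y => S.enthalpyDensity t y * S.u t y i) x
      (EuclideanSpace.single i 1) =
      (1 / 2 * DR (EuclideanSpace.single i 1) * (∑ j, S.u t x j ^ 2)
        + S.ρ t x * (∑ j, S.u t x j * DU j (EuclideanSpace.single i 1))
        + γ / (γ - 1) * (γ * S.ρ t x ^ (γ - 1) * DR (EuclideanSpace.single i 1))) * S.u t x i
      + (1 / 2 * S.ρ t x * (∑ j, S.u t x j ^ 2) + γ / (γ - 1) * S.ρ t x ^ γ)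
        * DU i (EuclideanSpace.single i 1) := by
    intro i
    have hN : HasFDerivAt (fun y => ∑ j, S.u t y j ^ 2) (∑ j, (2 * S.u t x j) • DU j) x := by
      refine HasFDerivAt.fun_sum fun j _ => ?_
      simpa using HasFDerivAt.pow (hU j) 2
    have h := ((((hR.const_mul (1 / 2 : ℝ)).fun_mul hN).fun_add
      (hP.const_mul (γ / (γ - 1)))).fun_mul (hU i)).fderiv
    simp only [enthalpyDensity, hsq]
    rw [h]
    simp only [_root_.add_apply, _root_.smul_apply,
      _root_.sum_apply, smul_eq_mul, mul_assoc, ← Finset.mul_sum]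
    simp only [hDU]
    ring
  have hmass' : r + (∑ i, DR (EuclideanSpace.single i 1) * S.u t x i)
      + S.ρ t x * (∑ i, DU i (EuclideanSpace.single i 1)) = 0 := by
    have h1 : ∀ i, fderiv ℝ (fun y => S.ρ t y * S.u t y i) x (EuclideanSpace.single i 1) =
        DR (EuclideanSpace.single i 1) * S.u t x i
          + S.ρ t x * DU i (EuclideanSpace.single i 1) := by
      intro i
      rw [(hR.fun_mul (hU i)).fderiv]
      simp [hDU]
      ring
    simp_rw [h1, Finset.sum_add_distrib, ← Finset.mul_sum] at hmass
    linarith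
  have hmom' : ∀ i, S.ρ t x * w i + S.ρ t x * (∑ j, DU i (EuclideanSpace.single j 1) * S.u t x j)
      + γ * S.ρ t x ^ (γ - 1) * DR (EuclideanSpace.single i 1) = 0 := by
    intro i
    have h1 : ∀ j, fderiv ℝ (fun y => S.ρ t y * S.u t y i * S.u t y j) x
        (EuclideanSpace.single j 1) =
        S.u t x i * (DR (EuclideanSpace.single j 1) * S.u t x j)
          + S.ρ t x * (DU i (EuclideanSpace.single j 1) * S.u t x j)
          + S.u t x i * (S.ρ t x * DU j (EuclideanSpace.single j 1)) := by
      intro j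
      rw [((hR.fun_mul (hU i)).fun_mul (hU j)).fderiv]
      simp [hDU]
      ring
    have h2 := hmom i
    rw [(hr.fun_mul (hwi i)).deriv, hP.fderiv] at h2
    simp_rw [h1, Finset.sum_add_distrib, ← Finset.mul_sum] at h2
    simp only [_root_.smul_apply, smul_eq_mul] at h2
    linear_combination h2 - S.u t x i * hmass'
  have hmom'' : S.ρ t x * (∑ i, S.u t x i * w i)
      + S.ρ t x * (∑ i, (∑ j, S.u t x j * DU j (EuclideanSpace.single i 1)) * S.u t x i)
      + γ * S.ρ t x ^ (γ - 1) * (∑ i, DR (EuclideanSpace.single i 1) * S.u t x i) = 0 := by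
    have hcomm : ∑ i, (∑ j, S.u t x j * DU j (EuclideanSpace.single i 1)) * S.u t x i =
        ∑ i, S.u t x i * (∑ j, DU i (EuclideanSpace.single j 1) * S.u t x j) := by
      simp_rw [Finset.sum_mul, Finset.mul_sum]
      rw [Finset.sum_comm]
      simp only [mul_assoc]
    rw [hcomm, Finset.mul_sum, Finset.mul_sum, Finset.mul_sum, ← Finset.sum_add_distrib,
      ← Finset.sum_add_distrib]
    refine Finset.sum_eq_zero fun i _ => ?_
    linear_combination S.u t x i * hmom' i
  have hpow : S.ρ t x * S.ρ t x ^ (γ - 1) = S.ρ t x ^ γ := by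
    rcases (S.ρ_nonneg t ht' x).eq_or_lt with h0 | h0
    · rw [← h0, Real.zero_rpow (show γ ≠ 0 by linarith), zero_mul]
    · rw [Real.rpow_sub_one h0.ne']
      field_simp
  have hsum : ∑ i : Fin n, fderiv ℝ (fun y => S.enthalpyDensity t y * S.u t y i) x
      (EuclideanSpace.single i 1) =
      (1 / 2 * (∑ j, S.u t x j ^ 2) + γ / (γ - 1) * (γ * S.ρ t x ^ (γ - 1)))
        * (∑ i, DR (EuclideanSpace.single i 1) * S.u t x i)
      + S.ρ t x * (∑ i, (∑ j, S.u t x j * DU j (EuclideanSpace.single i 1)) * S.u t x i)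
      + (1 / 2 * S.ρ t x * (∑ j, S.u t x j ^ 2) + γ / (γ - 1) * S.ρ t x ^ γ)
        * (∑ i, DU i (EuclideanSpace.single i 1)) := by
    simp_rw [hq]
    generalize ∑ j, S.u t x j ^ 2 = N
    rw [Finset.mul_sum, Finset.mul_sum, Finset.mul_sum, ← Finset.sum_add_distrib,
      ← Finset.sum_add_distrib]
    refine Finset.sum_congr rfl fun i _ => ?_
    ring
  rw [het, hsum, ← hpow]
  have hγ' : γ - 1 ≠ 0 := by linarith
  field_simp
  linear_combination ((γ - 1) * (∑ j, S.u t x j ^ 2) + 2 * γ * S.ρ t x ^ (γ - 1)) * hmass'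
    + 2 * (γ - 1) * hmom''

lemma exists_norm_u_le {t : ℝ} (ht : t ∈ Set.Icc 0 T) : ∃ B, ∀ x, ‖S.u t x‖ ≤ B := by
  have h := (S.decay_u t ht).eventually (eventually_le_nhds one_pos)
  obtain ⟨R, -, hR⟩ := (Metric.hasBasis_cobounded_compl_closedBall (0 : 𝔼)).eventually_iff.1 h
  obtain ⟨B, hB⟩ := (isCompact_closedBall (0 : 𝔼) R).exists_bound_of_continuousOn
    (S.contDiff_u ht).continuous.continuousOn
  refine ⟨max B 1, fun x => ?_⟩
  by_cases hx : x ∈ Metric.closedBall (0 : 𝔼) R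
  · exact (hB x hx).trans (le_max_left _ _)
  · exact (hR hx).trans (le_max_right _ _)

lemma integral_deriv_energyDensity (hγ : 1 < γ) {t : ℝ} (ht : t ∈ Set.Ioo 0 T) :
    ∫ x, deriv (fun τ => S.energyDensity τ x) t = 0 := by
  have ht' := Set.Ioo_subset_Icc_self ht
  by_cases hint : Integrable fun x => deriv (fun τ => S.energyDensity τ x) t
  swap
  · exact integral_undef hint
  obtain ⟨χ, C, hC, hχ, hχc, h01, h1, -, hgrad⟩ := exists_cutoff_seq n
  obtain ⟨B, hB⟩ := S.exists_norm_u_le ht'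
  have hlim : Tendsto (fun k => ∫ x, deriv (fun τ => S.energyDensity τ x) t * χ k x) atTop
      (nhds (∫ x, deriv (fun τ => S.energyDensity τ x) t)) := by
    refine tendsto_integral_of_dominated_convergence
      (fun x => ‖deriv (fun τ => S.energyDensity τ x) t‖)
      (fun k => hint.1.mul (hχ k).continuous.aestronglyMeasurable) hint.norm
      (fun k => ae_of_all _ fun x => ?_) (ae_of_all _ fun x => ?_)
    · rw [norm_mul, Real.norm_of_nonneg (h01 k x).1]
      exact mul_le_of_le_one_right (norm_nonneg _) (h01 k x).2
    · refine tendsto_const_nhds.congr' ?_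
      filter_upwards [eventually_ge_atTop ⌈‖x‖⌉₊] with k hk
      rw [(h1 k x (by simpa using Nat.ceil_le.1 hk)).1, mul_one]
  refine tendsto_nhds_unique hlim (squeeze_zero_norm
    (a := fun k : ℕ => C * B * (∫ x, ‖S.enthalpyDensity t x‖) * (1 / ((k : ℝ) + 1)))
    (fun k => ?_) ?_)
  · have hibp := integral_divergence_mul_eq_neg
      (fun i => (S.contDiff_enthalpyDensity hγ ht').mul (S.contDiff_u_apply ht' i)) (hχ k) (hχc k)
    simp_rw [S.deriv_energyDensity hγ ht, neg_mul]
    rw [integral_neg, hibp, neg_neg, mul_right_comm, ← integral_const_mul]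
    refine norm_integral_le_of_norm_le
      ((S.integrable_enthalpyDensity ht').norm.const_mul _) (ae_of_all _ fun x => ?_)
    simp only [mul_assoc, ← Finset.mul_sum, fderiv_apply_eq_sum_single]
    rw [norm_mul]
    have h2 : ‖fderiv ℝ (χ k) x (S.u t x)‖ ≤ C / ((k : ℝ) + 1) * B :=
      ((fderiv ℝ (χ k) x).le_opNorm _).trans
        (mul_le_mul (hgrad k x) (hB x) (norm_nonneg _) (by positivity))
    calc _ ≤ ‖S.enthalpyDensity t x‖ * (C / ((k : ℝ) + 1) * B) := by gcongr
      _ = _ := by ring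
  · simpa using tendsto_one_div_add_atTop_nhds_zero_nat.const_mul
      (C * B * ∫ x, ‖S.enthalpyDensity t x‖)

end Balance

section Functionals

variable {n : ℕ} {γ T : ℝ} (S : IsentropicEulerSolution n γ T)

local notation "𝔼" => EuclideanSpace ℝ (Fin n)

/-- The energy density plus the density of the moment of inertia; it dominates the densities of
all functionals considered here. -/
def totalDensity (t : ℝ) (x : 𝔼) : ℝ :=
  S.energyDensity t x + (1 / 2 : ℝ) * (S.ρ t x * ‖x‖ ^ 2)

lemma totalDensity_nonneg (hγ : 1 < γ) {t : ℝ} (ht : t ∈ Set.Icc 0 T) (x : 𝔼) :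
    0 ≤ S.totalDensity t x := by
  have h0 := S.ρ_nonneg t ht x
  have h1 : 0 ≤ S.ρ t x ^ γ / (γ - 1) := div_nonneg (Real.rpow_nonneg h0 _) (by linarith)
  unfold totalDensity energyDensity
  positivity

lemma continuousOn_totalDensity (hγ : 1 < γ) :
    ContinuousOn (fun p : ℝ × 𝔼 => S.totalDensity p.1 p.2) (Set.Icc 0 T ×ˢ Set.univ) := by
  have hρ := S.smooth_ρ.continuousOn
  have hu := S.smooth_u.continuousOn
  have hp := hρ.rpow_const (p := γ) fun _ _ => Or.inr (by linarith)
  unfold totalDensity energyDensity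
  fun_prop

lemma integrable_totalDensity {t : ℝ} (ht : t ∈ Set.Icc 0 T) : Integrable (S.totalDensity t) :=
  (S.integrable_energyDensity ht).fun_add ((S.int_ρx2 t ht).const_mul _)

lemma continuousOn_integral_totalDensity :
    ContinuousOn (fun t => ∫ x, S.totalDensity t x) (Set.Icc 0 T) := by
  have h : ContinuousOn (fun t => (∫ x, S.energyDensity t x)
      + (1 / 2 : ℝ) * ∫ x, S.ρ t x * ‖x‖ ^ 2) (Set.Icc 0 T) := fun t ht =>
    ((S.hIE t ht).continuousAt.add (S.hG t ht).continuousAt).continuousWithinAt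
  refine h.congr fun t ht => ?_
  simp only [totalDensity]
  rw [integral_add (S.integrable_energyDensity ht) ((S.int_ρx2 t ht).const_mul _),
    integral_const_mul]

lemma IE_eq_integral {t : ℝ} (ht : t ∈ Set.Icc 0 T) : S.IE t = ∫ x, S.energyDensity t x := by
  simp only [IE, Ek, I, energyDensity, mul_assoc]
  rw [integral_add ((S.int_ρu2 t ht).const_mul _) ((S.int_ργ t ht).div_const _),
    integral_const_mul, integral_div, one_div_mul_eq_div (γ - 1)]

lemma integrable_ρ_mul_inner {t : ℝ} (ht : t ∈ Set.Icc 0 T) :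
    Integrable fun x => S.ρ t x * ⟪S.u t x, x⟫_ℝ := by
  refine (S.int_ρux t ht).mono' ?_ (ae_of_all _ fun x => ?_)
  · exact ((S.contDiff_ρ ht).continuous.mul
      ((S.contDiff_u ht).continuous.inner continuous_id)).aestronglyMeasurable
  · rw [norm_mul, Real.norm_of_nonneg (S.ρ_nonneg t ht x), mul_assoc]
    exact mul_le_mul_of_nonneg_left (norm_inner_le_norm _ _) (S.ρ_nonneg t ht x)

lemma ρ_mul_norm_mul_norm_le (hγ : 1 < γ) {t : ℝ} (ht : t ∈ Set.Icc 0 T) (x : 𝔼) :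
    S.ρ t x * (‖S.u t x‖ * ‖x‖) ≤ S.totalDensity t x := by
  have h0 := S.ρ_nonneg t ht x
  have h1 : 0 ≤ S.ρ t x ^ γ / (γ - 1) := div_nonneg (Real.rpow_nonneg h0 _) (by linarith)
  unfold totalDensity energyDensity
  nlinarith [mul_nonneg h0 (sq_nonneg (‖S.u t x‖ - ‖x‖))]

lemma hasDerivAt_IE (hγ : 1 < γ) {t : ℝ} (ht : t ∈ Set.Ioo 0 T) : HasDerivAt S.IE 0 t := by
  have h := S.hIE t (Set.Ioo_subset_Icc_self ht)
  have h0 := S.integral_deriv_energyDensity hγ ht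
  simp only [energyDensity] at h0
  rw [h0] at h
  refine h.congr_of_eventuallyEq ?_
  filter_upwards [Icc_mem_nhds ht.1 ht.2] with s hs using S.IE_eq_integral hs

lemma hasDerivAt_G (hγ : 1 < γ) {t : ℝ} (ht : t ∈ Set.Ioo 0 T) :
    HasDerivAt S.G (S.F t) t := by
  obtain ⟨χ, C, hC, hχ, hχc, h01, h1, hgrad, -⟩ := exists_cutoff_seq n
  have hG : S.G = fun t => ∫ x, (1 / 2 : ℝ) * (S.ρ t x * ‖x‖ ^ 2) := by
    funext t
    rw [integral_const_mul, G]
  have hψ : ∀ k, ContDiff ℝ 1 fun x : 𝔼 => (1 / 2 : ℝ) * ‖x‖ ^ 2 * χ k x := fun k =>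
    (contDiff_const.mul (contDiff_norm_sq ℝ)).mul (hχ k)
  have hfd : ∀ k x v, fderiv ℝ (fun x : 𝔼 => (1 / 2 : ℝ) * ‖x‖ ^ 2 * χ k x) x v =
      ⟪v, x⟫_ℝ * χ k x + 1 / 2 * ‖x‖ ^ 2 * fderiv ℝ (χ k) x v := by
    intro k x v
    have h := (((hasStrictFDerivAt_norm_sq x).hasFDerivAt.const_mul (1 / 2 : ℝ)).fun_mul
      ((hχ k).differentiable one_ne_zero x).hasFDerivAt).fderiv
    rw [h]
    simp [real_inner_comm v x]
    ring
  rw [hG]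
  refine hasDerivAt_integral_of_truncation (e := S.totalDensity) (C := 1 + C)
    (fk := fun k t x => S.ρ t x * (1 / 2 * ‖x‖ ^ 2 * χ k x))
    (fk' := fun k t x => S.ρ t x * fderiv ℝ (fun x : 𝔼 => (1 / 2 : ℝ) * ‖x‖ ^ 2 * χ k x) x
      (S.u t x))
    (fun t ht => S.totalDensity_nonneg hγ ht) (S.continuousOn_totalDensity hγ)
    (fun t ht => S.integrable_totalDensity ht) S.continuousOn_integral_totalDensity
    (fun k t ht => S.hasDerivAt_integral_ρ_mul (hψ k) (hχc k).mul_left ht)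
    (fun k t ht => ?_) (fun k t ht => ?_)
    (fun t ht => (S.int_ρx2 t (Set.Ioo_subset_Icc_self ht)).const_mul _)
    (fun t ht => S.integrable_ρ_mul_inner (Set.Ioo_subset_Icc_self ht))
    (fun k t ht x hx => ?_) (fun k t ht x => ?_) (fun k t ht x => ?_) ht
  · exact (S.contDiff_ρ (Set.Ioo_subset_Icc_self ht)).continuous.mul (hψ k).continuous
  · exact (S.contDiff_ρ (Set.Ioo_subset_Icc_self ht)).continuous.mul
      (((hψ k).continuous_fderiv one_ne_zero).clm_apply
        (S.contDiff_u (Set.Ioo_subset_Icc_self ht)).continuous)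
  · rw [hfd, (h1 k x hx).1, (h1 k x hx).2]
    constructor
    · ring
    · simp
  · have ht' := Set.Ioo_subset_Icc_self ht
    have h0 := S.ρ_nonneg t ht' x
    have hp : 0 ≤ S.ρ t x ^ γ / (γ - 1) := div_nonneg (Real.rpow_nonneg h0 _) (by linarith)
    have he := S.totalDensity_nonneg hγ ht' x
    have hle : S.ρ t x * (1 / 2 * ‖x‖ ^ 2) ≤ S.totalDensity t x := by
      unfold totalDensity energyDensity
      have : 0 ≤ (1 / 2 : ℝ) * S.ρ t x * ‖S.u t x‖ ^ 2 := by positivity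
      linarith
    have heq : S.ρ t x * (1 / 2 * ‖x‖ ^ 2 * χ k x) - 1 / 2 * (S.ρ t x * ‖x‖ ^ 2) =
        -(S.ρ t x * (1 / 2 * ‖x‖ ^ 2) * (1 - χ k x)) := by ring
    have h1χ : 0 ≤ 1 - χ k x := sub_nonneg.2 (h01 k x).2
    rw [heq, abs_neg, abs_of_nonneg (by positivity)]
    calc _ ≤ S.ρ t x * (1 / 2 * ‖x‖ ^ 2) * 1 := by
          gcongr
          linarith [(h01 k x).1]
      _ ≤ (1 + C) * S.totalDensity t x := by nlinarith
  · have ht' := Set.Ioo_subset_Icc_self ht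
    have h0 := S.ρ_nonneg t ht' x
    have h1χ : |χ k x - 1| ≤ 1 := abs_le.2 ⟨by linarith [(h01 k x).1], by linarith [(h01 k x).2]⟩
    have heq : S.ρ t x * (⟪S.u t x, x⟫_ℝ * χ k x + 1 / 2 * ‖x‖ ^ 2 * fderiv ℝ (χ k) x (S.u t x))
        - S.ρ t x * ⟪S.u t x, x⟫_ℝ = S.ρ t x * (⟪S.u t x, x⟫_ℝ * (χ k x - 1)
        + 1 / 2 * ‖x‖ ^ 2 * fderiv ℝ (χ k) x (S.u t x)) := by ring
    have ha : |⟪S.u t x, x⟫_ℝ * (χ k x - 1)| ≤ ‖S.u t x‖ * ‖x‖ * 1 := by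
      rw [abs_mul]
      exact mul_le_mul (abs_real_inner_le_norm _ _) h1χ (abs_nonneg _) (by positivity)
    have hb : |1 / 2 * ‖x‖ ^ 2 * fderiv ℝ (χ k) x (S.u t x)| ≤ C * (‖S.u t x‖ * ‖x‖) := by
      have hop : |fderiv ℝ (χ k) x (S.u t x)| ≤ ‖fderiv ℝ (χ k) x‖ * ‖S.u t x‖ :=
        (fderiv ℝ (χ k) x).le_opNorm _
      rw [abs_mul, abs_of_nonneg (by positivity : (0 : ℝ) ≤ 1 / 2 * ‖x‖ ^ 2)]
      calc _ ≤ ‖x‖ ^ 2 * (‖fderiv ℝ (χ k) x‖ * ‖S.u t x‖) := by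
            gcongr
            nlinarith [sq_nonneg ‖x‖]
        _ = ‖x‖ * ‖fderiv ℝ (χ k) x‖ * (‖S.u t x‖ * ‖x‖) := by ring
        _ ≤ _ := by gcongr; exact hgrad k x
    rw [hfd, heq, abs_mul, abs_of_nonneg h0]
    calc _ ≤ S.ρ t x * (‖S.u t x‖ * ‖x‖ * 1 + C * (‖S.u t x‖ * ‖x‖)) := by
          gcongr
          exact (abs_add_le _ _).trans (add_le_add ha hb)
      _ = (1 + C) * (S.ρ t x * (‖S.u t x‖ * ‖x‖)) := by ring
      _ ≤ _ := by gcongr; exact S.ρ_mul_norm_mul_norm_le hγ ht' x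

/-- The truncated virial identity. -/
lemma hasDerivAt_integral_ρ_inner_mul (hγ : 1 < γ) {χ : 𝔼 → ℝ} (hχ : ContDiff ℝ 1 χ)
    (hχc : HasCompactSupport χ) {t : ℝ} (ht : t ∈ Set.Ioo 0 T) :
    HasDerivAt (fun τ => ∫ x, S.ρ τ x * ⟪S.u τ x, x⟫_ℝ * χ x)
      (∫ x, (S.ρ t x * (⟪S.u t x, x⟫_ℝ * fderiv ℝ χ x (S.u t x) + ‖S.u t x‖ ^ 2 * χ x)
        + S.ρ t x ^ γ * (fderiv ℝ χ x x + n * χ x))) t := by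
  have hψ : ∀ i : Fin n, ContDiff ℝ 1 fun x : 𝔼 => x i * χ x := fun i =>
    (EuclideanSpace.proj i : 𝔼 →L[ℝ] ℝ).contDiff.mul hχ
  have hψc : ∀ i : Fin n, HasCompactSupport fun x : 𝔼 => x i * χ x := fun i => hχc.mul_left
  have hfd : ∀ (i : Fin n) (x v : 𝔼), fderiv ℝ (fun x : 𝔼 => x i * χ x) x v =
      x i * fderiv ℝ χ x v + v i * χ x := by
    intro i x v
    have h : fderiv ℝ (fun x : 𝔼 => x i * χ x) x = _ :=
      ((EuclideanSpace.proj i : 𝔼 →L[ℝ] ℝ).hasFDerivAt.fun_mul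
        (hχ.differentiable one_ne_zero x).hasFDerivAt).fderiv
    rw [h]
    simp
    ring
  have hsum := HasDerivAt.fun_sum (u := Finset.univ) fun i _ =>
    S.hasDerivAt_integral_ρu_mul hγ (hψ i) (hψc i) ht i
  have ht' := Set.Ioo_subset_Icc_self ht
  have hinner : ∀ v x : 𝔼, ⟪v, x⟫_ℝ = ∑ i, v i * x i := fun v x => by
    simp [PiLp.inner_apply, mul_comm]
  have hcψ : ∀ i v, Continuous fun x => fderiv ℝ (fun x : 𝔼 => x i * χ x) x v := fun i v =>
    ((hψ i).continuous_fderiv one_ne_zero).clm_apply continuous_const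
  have hval : ∫ x, (S.ρ t x * (⟪S.u t x, x⟫_ℝ * fderiv ℝ χ x (S.u t x) + ‖S.u t x‖ ^ 2 * χ x)
        + S.ρ t x ^ γ * (fderiv ℝ χ x x + n * χ x)) =
      ∑ i, ∫ x, (S.ρ t x * S.u t x i * fderiv ℝ (fun x : 𝔼 => x i * χ x) x (S.u t x)
        + S.ρ t x ^ γ * fderiv ℝ (fun x : 𝔼 => x i * χ x) x (EuclideanSpace.single i 1)) := by
    rw [← integral_finsetSum]
    · refine integral_congr_ae (ae_of_all _ fun x => ?_)
      have hterm : ∀ i : Fin n,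
          S.ρ t x * S.u t x i * fderiv ℝ (fun x : 𝔼 => x i * χ x) x (S.u t x)
            + S.ρ t x ^ γ * fderiv ℝ (fun x : 𝔼 => x i * χ x) x (EuclideanSpace.single i 1) =
          S.ρ t x * fderiv ℝ χ x (S.u t x) * (S.u t x i * x i) + S.ρ t x * χ x * S.u t x i ^ 2
            + S.ρ t x ^ γ * (x i * fderiv ℝ χ x (EuclideanSpace.single i 1))
            + S.ρ t x ^ γ * χ x := by
        intro i
        have hsingle : (EuclideanSpace.single i 1 : 𝔼) i = 1 := by simp
        rw [hfd, hfd, hsingle]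
        ring
      simp only [hterm, Finset.sum_add_distrib, ← Finset.mul_sum, fderiv_apply_eq_sum_single,
        ← hinner, ← EuclideanSpace.real_norm_sq_eq, Finset.sum_const, Finset.card_univ,
        Fintype.card_fin, nsmul_eq_mul]
      ring
    · intro i _
      have hsupp := (hψc i).fderiv (𝕜 := ℝ)
      refine Integrable.fun_add (Continuous.integrable_of_hasCompactSupport ?_ ?_)
        (Continuous.integrable_of_hasCompactSupport ?_ ?_)
      · exact ((S.contDiff_ρ ht').continuous.mul (S.contDiff_u_apply ht' i).continuous).mul
          (((hψ i).continuous_fderiv one_ne_zero).clm_apply (S.contDiff_u ht').continuous)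
      · exact hsupp.mono fun x hx hx0 => hx <| by
          simp only [hx0, _root_.zero_apply, mul_zero]
      · exact (S.contDiff_pressure hγ ht').continuous.mul (hcψ i _)
      · exact ((hψc i).fderiv_apply ℝ _).mul_left
  rw [hval]
  refine hsum.congr_of_eventuallyEq ?_
  filter_upwards [Icc_mem_nhds ht.1 ht.2] with s hs
  rw [← integral_finsetSum]
  · refine integral_congr_ae (ae_of_all _ fun x => ?_)
    simp only [hinner, Finset.mul_sum, Finset.sum_mul, mul_assoc]
  · intro i _
    exact (((S.contDiff_ρ hs).continuous.mul (S.contDiff_u_apply hs i).continuous).mul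
      (hψ i).continuous).integrable_of_hasCompactSupport (hψc i).mul_left

lemma hasDerivAt_F (hγ : 1 < γ) {t : ℝ} (ht : t ∈ Set.Ioo 0 T) :
    HasDerivAt S.F (2 * S.Ek t + n * (γ - 1) * S.I t) t := by
  obtain ⟨χ, C, hC, hχ, hχc, h01, h1, hgrad, -⟩ := exists_cutoff_seq n
  have hγ' : 0 < γ - 1 := by linarith
  have hval : 2 * S.Ek t + n * (γ - 1) * S.I t =
      ∫ x, (S.ρ t x * ‖S.u t x‖ ^ 2 + n * S.ρ t x ^ γ) := by
    have ht' := Set.Ioo_subset_Icc_self ht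
    rw [integral_add (S.int_ρu2 t ht') ((S.int_ργ t ht').const_mul _), integral_const_mul, Ek, I]
    field_simp
  rw [hval]
  refine hasDerivAt_integral_of_truncation (e := S.totalDensity)
    (C := 2 * (1 + C) + (γ - 1) * (C + n))
    (f' := fun t x => S.ρ t x * ‖S.u t x‖ ^ 2 + n * S.ρ t x ^ γ)
    (fun t ht => S.totalDensity_nonneg hγ ht) (S.continuousOn_totalDensity hγ)
    (fun t ht => S.integrable_totalDensity ht) S.continuousOn_integral_totalDensity
    (fun k t ht => S.hasDerivAt_integral_ρ_inner_mul hγ (hχ k) (hχc k) ht)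
    (fun k t ht => ?_) (fun k t ht => ?_)
    (fun t ht => S.integrable_ρ_mul_inner (Set.Ioo_subset_Icc_self ht))
    (fun t ht => (S.int_ρu2 t (Set.Ioo_subset_Icc_self ht)).fun_add
      ((S.int_ργ t (Set.Ioo_subset_Icc_self ht)).const_mul _))
    (fun k t ht x hx => ?_) (fun k t ht x => ?_) (fun k t ht x => ?_) ht
  · have hρ := (S.contDiff_ρ (Set.Ioo_subset_Icc_self ht)).continuous
    have hu := (S.contDiff_u (Set.Ioo_subset_Icc_self ht)).continuous
    have hχ' := (hχ k).continuous
    fun_prop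
  · have hρ := (S.contDiff_ρ (Set.Ioo_subset_Icc_self ht)).continuous
    have hu := (S.contDiff_u (Set.Ioo_subset_Icc_self ht)).continuous
    have hp := (S.contDiff_pressure hγ (Set.Ioo_subset_Icc_self ht)).continuous
    have hχ' := (hχ k).continuous
    have hdχ := (hχ k).continuous_fderiv one_ne_zero
    fun_prop
  · rw [(h1 k x hx).1, (h1 k x hx).2]
    constructor
    · ring
    · simp [mul_comm]
  · have ht' := Set.Ioo_subset_Icc_self ht
    have h0 := S.ρ_nonneg t ht' x
    have he := S.totalDensity_nonneg hγ ht' x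
    have h1χ : |χ k x - 1| ≤ 1 := abs_le.2 ⟨by linarith [(h01 k x).1], by linarith [(h01 k x).2]⟩
    have heq : S.ρ t x * ⟪S.u t x, x⟫_ℝ * χ k x - S.ρ t x * ⟪S.u t x, x⟫_ℝ =
        S.ρ t x * ⟪S.u t x, x⟫_ℝ * (χ k x - 1) := by ring
    rw [heq, abs_mul, abs_mul, abs_of_nonneg h0]
    calc _ ≤ S.ρ t x * (‖S.u t x‖ * ‖x‖) * 1 := by
          gcongr
          exact abs_real_inner_le_norm _ _
      _ ≤ 1 * S.totalDensity t x := by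
          rw [mul_one, one_mul]
          exact S.ρ_mul_norm_mul_norm_le hγ ht' x
      _ ≤ _ := by
          gcongr
          have : 0 ≤ (γ - 1) * (C + n) := by positivity
          linarith
  · have ht' := Set.Ioo_subset_Icc_self ht
    have h0 := S.ρ_nonneg t ht' x
    have hp : 0 ≤ S.ρ t x ^ γ := Real.rpow_nonneg h0 _
    have h1χ : |χ k x - 1| ≤ 1 := abs_le.2 ⟨by linarith [(h01 k x).1], by linarith [(h01 k x).2]⟩
    have heq : S.ρ t x * (⟪S.u t x, x⟫_ℝ * fderiv ℝ (χ k) x (S.u t x) + ‖S.u t x‖ ^ 2 * χ k x)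
        + S.ρ t x ^ γ * (fderiv ℝ (χ k) x x + n * χ k x)
        - (S.ρ t x * ‖S.u t x‖ ^ 2 + n * S.ρ t x ^ γ) =
        S.ρ t x * (⟪S.u t x, x⟫_ℝ * fderiv ℝ (χ k) x (S.u t x) + ‖S.u t x‖ ^ 2 * (χ k x - 1))
        + S.ρ t x ^ γ * (fderiv ℝ (χ k) x x + n * (χ k x - 1)) := by ring
    have ha : |⟪S.u t x, x⟫_ℝ * fderiv ℝ (χ k) x (S.u t x)| ≤ C * ‖S.u t x‖ ^ 2 := by
      rw [abs_mul]
      calc _ ≤ (‖S.u t x‖ * ‖x‖) * (‖fderiv ℝ (χ k) x‖ * ‖S.u t x‖) :=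
            mul_le_mul (abs_real_inner_le_norm _ _) ((fderiv ℝ (χ k) x).le_opNorm _)
              (abs_nonneg _) (by positivity)
        _ = ‖x‖ * ‖fderiv ℝ (χ k) x‖ * ‖S.u t x‖ ^ 2 := by ring
        _ ≤ _ := by gcongr; exact hgrad k x
    have hb : |‖S.u t x‖ ^ 2 * (χ k x - 1)| ≤ ‖S.u t x‖ ^ 2 * 1 := by
      rw [abs_mul, abs_of_nonneg (by positivity)]
      gcongr
    have hc : |fderiv ℝ (χ k) x x| ≤ C :=
      ((fderiv ℝ (χ k) x).le_opNorm _).trans (by rw [mul_comm]; exact hgrad k x)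
    have hd : |(n : ℝ) * (χ k x - 1)| ≤ n * 1 := by
      rw [abs_mul, Nat.abs_cast]
      gcongr
    have hx2 : 0 ≤ (1 / 2 : ℝ) * (S.ρ t x * ‖x‖ ^ 2) := by positivity
    have hu2 : 0 ≤ (1 / 2 : ℝ) * S.ρ t x * ‖S.u t x‖ ^ 2 := by positivity
    have hq : 0 ≤ S.ρ t x ^ γ / (γ - 1) := by positivity
    have hn0 : 0 ≤ (γ - 1) * (C + n) := by positivity
    rw [heq]
    calc _ ≤ S.ρ t x * (C * ‖S.u t x‖ ^ 2 + ‖S.u t x‖ ^ 2 * 1) + S.ρ t x ^ γ * (C + n * 1) := by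
          refine (abs_add_le _ _).trans ?_
          rw [abs_mul, abs_mul, abs_of_nonneg h0, abs_of_nonneg hp]
          gcongr
          · exact (abs_add_le _ _).trans (add_le_add ha hb)
          · exact (abs_add_le _ _).trans (add_le_add hc hd)
      _ = 2 * (1 + C) * ((1 / 2 : ℝ) * S.ρ t x * ‖S.u t x‖ ^ 2)
          + (γ - 1) * (C + n) * (S.ρ t x ^ γ / (γ - 1)) := by
          field_simp
          ring
      _ ≤ (2 * (1 + C) + (γ - 1) * (C + n)) * ((1 / 2 : ℝ) * S.ρ t x * ‖S.u t x‖ ^ 2)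
          + (2 * (1 + C) + (γ - 1) * (C + n)) * (S.ρ t x ^ γ / (γ - 1)) := by
          gcongr <;> linarith
      _ ≤ _ := by
          unfold totalDensity energyDensity
          rw [← mul_add]
          refine mul_le_mul_of_nonneg_left ?_ (by positivity)
          linarith

lemma hasDerivAt_IJ (hγ : 1 < γ) {t : ℝ} (ht : t ∈ Set.Ioo 0 T) :
    HasDerivAt S.IJ ((t + 1) * (2 - n * (γ - 1)) * S.I t) t := by
  have h1 : HasDerivAt (fun τ : ℝ => τ + 1) 1 t := (hasDerivAt_id t).add_const 1
  have h : HasDerivAt S.IJ _ t := ((S.hasDerivAt_G hγ ht).fun_sub (h1.fun_mul (S.hasDerivAt_F hγ ht))).fun_add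
    ((h1.fun_pow 2).fun_mul (S.hasDerivAt_IE hγ ht))
  refine h.congr_deriv ?_
  simp only [IE]
  push_cast
  ring

lemma continuousOn_IJ : ContinuousOn S.IJ (Set.Icc 0 T) := by
  have hG : ContinuousOn S.G (Set.Icc 0 T) := fun t ht =>
    (S.hG t ht).continuousAt.continuousWithinAt
  have hF : ContinuousOn S.F (Set.Icc 0 T) := fun t ht =>
    (S.hF t ht).continuousAt.continuousWithinAt
  have hIE : ContinuousOn S.IE (Set.Icc 0 T) :=
    ContinuousOn.congr (fun t ht => (S.hIE t ht).continuousAt.continuousWithinAt)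
      fun t ht => S.IE_eq_integral ht
  unfold IJ
  fun_prop

lemma I_nonneg (hγ : 1 < γ) {t : ℝ} (ht : t ∈ Set.Icc 0 T) : 0 ≤ S.I t :=
  mul_nonneg (by rw [one_div, inv_nonneg]; linarith)
    (integral_nonneg fun x => Real.rpow_nonneg (S.ρ_nonneg t ht x) _)

/-- `IJ` dominates the weighted potential energy, the difference being
`(1/2) ∫ ρ |x - (t+1)u|²`. -/
lemma sq_mul_I_le_IJ {t : ℝ} (ht : t ∈ Set.Icc 0 T) : (t + 1) ^ 2 * S.I t ≤ S.IJ t := by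
  have h : 0 ≤ ∫ x, S.ρ t x * ‖x - (t + 1) • S.u t x‖ ^ 2 :=
    integral_nonneg fun x => mul_nonneg (S.ρ_nonneg t ht x) (sq_nonneg _)
  have heq : ∀ x, S.ρ t x * ‖x - (t + 1) • S.u t x‖ ^ 2 =
      S.ρ t x * ‖x‖ ^ 2 - 2 * (t + 1) * (S.ρ t x * ⟪S.u t x, x⟫_ℝ)
        + (t + 1) ^ 2 * (S.ρ t x * ‖S.u t x‖ ^ 2) := fun x => by
    rw [norm_sub_sq_real, inner_smul_right, norm_smul, real_inner_comm, mul_pow, Real.norm_eq_abs,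
      sq_abs]
    ring
  have hsub : Integrable fun x =>
      S.ρ t x * ‖x‖ ^ 2 - 2 * (t + 1) * (S.ρ t x * ⟪S.u t x, x⟫_ℝ) :=
    (S.int_ρx2 t ht).sub ((S.integrable_ρ_mul_inner ht).const_mul _)
  simp_rw [heq] at h
  rw [integral_add hsub
      ((S.int_ρu2 t ht).const_mul _),
    integral_sub (S.int_ρx2 t ht) ((S.integrable_ρ_mul_inner ht).const_mul _),
    integral_const_mul, integral_const_mul] at h
  simp only [IJ, IE, G, F, Ek]
  linarith

end Functionals

end IsentropicEulerSolution

/-- **Proposition 3.6, isentropic Euler case: upper decay of the potential energy.**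
With `IJ(0) = G(0) − F(0) + IE(0)`: if `1 < γ ≤ 1 + 2/n` then
`I(t) ≤ IJ(0)/(t+1)^{n(γ−1)}`; if `γ > 1 + 2/n` then `I(t) ≤ IJ(0)/(t+1)²`. -/
theorem IsentropicEulerSolution.potential_energy_upper_decay
    {n : ℕ} {γ T : ℝ} (hn : 1 ≤ n) (hγ : 1 < γ) (hT : 0 < T)
    (S : IsentropicEulerSolution n γ T) :
    (γ ≤ 1 + 2 / n →
      ∀ t ∈ Set.Icc 0 T,
        S.I t ≤ (S.G 0 - S.F 0 + S.IE 0) / (t + 1) ^ ((n : ℝ) * (γ - 1))) ∧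
    (1 + 2 / n < γ →
      ∀ t ∈ Set.Icc 0 T,
        S.I t ≤ (S.G 0 - S.F 0 + S.IE 0) / (t + 1) ^ 2) := by
  have hn' : (0 : ℝ) < n := by exact_mod_cast hn
  have hJ0 : S.G 0 - S.F 0 + S.IE 0 = S.IJ 0 := by simp [IsentropicEulerSolution.IJ]
  have h0mem : (0 : ℝ) ∈ Set.Icc 0 T := ⟨le_rfl, hT.le⟩
  rw [hJ0]
  refine ⟨fun hle t ht => ?_, fun hlt t ht => ?_⟩
  · have ha : 0 ≤ 2 - n * (γ - 1) := by
      have : γ - 1 ≤ 2 / n := by linarith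
      rw [le_div_iff₀ hn'] at this
      linarith
    have hanti : AntitoneOn (fun s => S.IJ s * (s + 1) ^ (-(2 - n * (γ - 1)))) (Set.Icc 0 T) := by
      refine antitoneOn_of_hasDerivWithinAt_nonpos (convex_Icc 0 T)
        (f' := fun s => (s + 1) * (2 - n * (γ - 1)) * S.I s * (s + 1) ^ (-(2 - n * (γ - 1)))
          + S.IJ s * (1 * -(2 - n * (γ - 1)) * (s + 1) ^ (-(2 - n * (γ - 1)) - 1)))
        (S.continuousOn_IJ.mul (ContinuousOn.rpow_const (by fun_prop) fun s hs =>
          Or.inl (by linarith [hs.1]))) (fun s hs => ?_) (fun s hs => ?_)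
      · rw [interior_Icc] at hs
        exact ((S.hasDerivAt_IJ hγ hs).fun_mul (((hasDerivAt_id s).add_const 1).rpow_const
          (Or.inl (by simpa using (by linarith [hs.1] : s + 1 ≠ 0))))).hasDerivWithinAt
      · rw [interior_Icc] at hs
        have hs1 : 0 < s + 1 := by linarith [hs.1]
        have hJ := S.sq_mul_I_le_IJ (Set.Ioo_subset_Icc_self hs)
        rw [Real.rpow_sub_one hs1.ne']
        have heq : (s + 1) * (2 - n * (γ - 1)) * S.I s * (s + 1) ^ (-(2 - n * (γ - 1)))
            + S.IJ s * (1 * -(2 - n * (γ - 1)) * ((s + 1) ^ (-(2 - n * (γ - 1))) / (s + 1))) =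
            -((2 - n * (γ - 1)) * ((s + 1) ^ (-(2 - n * (γ - 1))) / (s + 1))
              * (S.IJ s - (s + 1) ^ 2 * S.I s)) := by
          field_simp
          ring
        rw [heq, neg_nonpos]
        exact mul_nonneg (by positivity) (sub_nonneg.2 hJ)
    have h := hanti h0mem ht ht.1
    have ht1 : 0 < t + 1 := by linarith [ht.1]
    simp only [zero_add, Real.one_rpow, mul_one] at h
    rw [le_div_iff₀ (by positivity)]
    have hpow : (t + 1) ^ ((n : ℝ) * (γ - 1)) =
        (t + 1) ^ 2 * (t + 1) ^ (-(2 - (n : ℝ) * (γ - 1))) := by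
      rw [← Real.rpow_two, ← Real.rpow_add ht1]
      ring_nf
    calc S.I t * (t + 1) ^ ((n : ℝ) * (γ - 1))
        = (t + 1) ^ 2 * S.I t * (t + 1) ^ (-(2 - (n : ℝ) * (γ - 1))) := by rw [hpow]; ring
      _ ≤ S.IJ t * (t + 1) ^ (-(2 - (n : ℝ) * (γ - 1))) := by
          gcongr
          exact S.sq_mul_I_le_IJ ht
      _ ≤ S.IJ 0 := h
  · have ha : 2 - n * (γ - 1) ≤ 0 := by
      have : 2 / n < γ - 1 := by linarith
      rw [div_lt_iff₀ hn'] at this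
      linarith
    have hanti : AntitoneOn S.IJ (Set.Icc 0 T) := by
      refine antitoneOn_of_hasDerivWithinAt_nonpos (convex_Icc 0 T)
        (f' := fun s => (s + 1) * (2 - n * (γ - 1)) * S.I s) S.continuousOn_IJ
        (fun s hs => ?_) (fun s hs => ?_) <;> rw [interior_Icc] at hs
      · exact (S.hasDerivAt_IJ hγ hs).hasDerivWithinAt
      · exact mul_nonpos_of_nonpos_of_nonneg
          (mul_nonpos_of_nonneg_of_nonpos (by linarith [hs.1]) ha)
          (S.I_nonneg hγ (Set.Ioo_subset_Icc_self hs))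
    have ht1 : 0 < t + 1 := by linarith [ht.1]
    rw [le_div_iff₀ (by positivity), mul_comm]
    exact (S.sq_mul_I_le_IJ ht).trans (hanti h0mem ht ht.1)
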